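/- For every state s, the one-step variance of the posterior mean value under the posterior mean model decomposes as Var_{a,s'∼π,p̄}[V̄^π(s')] = w(s) + E[Var_{a,s'∼π,p}[V̄^π(s')]], where w(s) := Var[Σ_{a,s'} π(a|s) p(s'|s,a) V̄^π(s')] is the epistemic component (variance over the random p) and the last term is the expected aleatoric component. -/

import Mathlib

/-!
Write `X = Σ_{a,s'} π(a|s) p(s'|s,a) V̄(s')` for the random one-step mean and `Y` for the same sum with
`V̄(s')²`. Both are linear in `p`, so integrating replaces `p` by its mean `p̄`
(`integral_stepMean`); hence the left-hand side is `E[Y] - E[X]²`. The right-hand side is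
`(E[X²] - E[X]²) + (E[Y] - E[X²])`, where splitting the last expectation uses that `X` is
square-integrable (`integrable_sq_stepMean`). The argument works with any fixed function of the
next state in place of `V̄`.
-/

open MeasureTheory ProbabilityTheory
open scoped BigOperators

/-- One-step (aleatoric) variance of `f` at state `s` under policy `pol` and transition
function `q`: `Var_{a,s' ~ pol, q}[f s'] = Σ_{a,s'} q(a,s'|s) f(s')² − (Σ_{a,s'} q(a,s'|s) f(s'))²`. -/
noncomputable def stepVar {S A : Type*} [Fintype S] [Fintype A]
    (pol : S → A → ℝ) (q : S → A → S → ℝ) (f : S → ℝ) (s : S) : ℝ :=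
  (∑ a, ∑ s', pol s a * q s a s' * (f s') ^ 2)
    - (∑ a, ∑ s', pol s a * q s a s' * f s') ^ 2

/-- Variance of a real random variable `X` on `(Ω, μ)`: `E[X²] − (E[X])²`. -/
noncomputable def mVar {Ω : Type*} [MeasurableSpace Ω] (μ : MeasureTheory.Measure Ω)
    (X : Ω → ℝ) : ℝ :=
  (∫ ω, (X ω) ^ 2 ∂μ) - (∫ ω, X ω ∂μ) ^ 2

section StepMean

variable {S A Ω : Type*} [Fintype S] [Fintype A] [MeasurableSpace Ω] {μ : Measure Ω}
  {p : Ω → S → A → S → ℝ}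

lemma integrable_stepMean (hpInt : ∀ s a s', Integrable (fun ω => p ω s a s') μ)
    (pol : S → A → ℝ) (f : S → ℝ) (s : S) :
    Integrable (fun ω => ∑ a, ∑ s', pol s a * p ω s a s' * f s') μ :=
  integrable_finsetSum _ fun a _ => integrable_finsetSum _ fun s' _ =>
    ((hpInt s a s').const_mul _).mul_const _

lemma integral_stepMean (hpInt : ∀ s a s', Integrable (fun ω => p ω s a s') μ)
    (pol : S → A → ℝ) (f : S → ℝ) (s : S) :
    ∫ ω, ∑ a, ∑ s', pol s a * p ω s a s' * f s' ∂μ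
      = ∑ a, ∑ s', pol s a * (∫ ω, p ω s a s' ∂μ) * f s' := by
  have hterm : ∀ a s', Integrable (fun ω => pol s a * p ω s a s' * f s') μ := fun a s' =>
    ((hpInt s a s').const_mul _).mul_const _
  rw [integral_finsetSum _ fun a _ => integrable_finsetSum _ fun s' _ => hterm a s']
  refine Finset.sum_congr rfl fun a _ => ?_
  rw [integral_finsetSum _ fun s' _ => hterm a s']
  refine Finset.sum_congr rfl fun s' _ => ?_
  rw [integral_mul_const, integral_const_mul]

/-- The random one-step mean is a finite linear combination of the `L²` variables `p(s'|s,a)`,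
hence itself in `L²`. -/
lemma integrable_sq_stepMean (hpMeas : ∀ s a s', Measurable fun ω => p ω s a s')
    (hpSqInt : ∀ s a s', Integrable (fun ω => (p ω s a s') ^ 2) μ)
    (pol : S → A → ℝ) (f : S → ℝ) (s : S) :
    Integrable (fun ω => (∑ a, ∑ s', pol s a * p ω s a s' * f s') ^ 2) μ := by
  have hterm : ∀ a s', MemLp (fun ω => pol s a * p ω s a s' * f s') 2 μ := fun a s' =>
    (((memLp_two_iff_integrable_sq (hpMeas s a s').aestronglyMeasurable).2
      (hpSqInt s a s')).const_mul _).mul_const _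
  exact (memLp_finsetSum _ fun a _ => memLp_finsetSum _ fun s' _ => hterm a s').integrable_sq

end StepMean

/-- uncertainty decomposition, eq. (10): for every state `s`,
`Var_{a,s'∼π,p̄}[V̄^π(s')] = w(s) + E[Var_{a,s'∼π,p}[V̄^π(s')]]`. -/
theorem total_uncertainty_decomposition
    {S A : Type*} [Fintype S] [Fintype A] [Nonempty S] [Nonempty A]
    {Ω : Type*} [MeasurableSpace Ω] {μ : Measure Ω} [IsProbabilityMeasure μ]
    (γ : ℝ) (hγ0 : 0 ≤ γ) (hγ1 : γ < 1)
    (r : S → A → ℝ) (pol : S → A → ℝ)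
    (hpol0 : ∀ s a, 0 ≤ pol s a) (hpol1 : ∀ s, ∑ a, pol s a = 1)
    (p : Ω → S → A → S → ℝ)
    (hp0 : ∀ ω s a s', 0 ≤ p ω s a s') (hp1 : ∀ ω s a, ∑ s', p ω s a s' = 1)
    (hpMeas : ∀ s a s', Measurable fun ω => p ω s a s')
    (V : Ω → S → ℝ)
    (hVMeas : ∀ s, Measurable fun ω => V ω s)
    (hBellman : ∀ ω s, V ω s = (∑ a, pol s a * r s a)
        + γ * ∑ a, ∑ s', pol s a * p ω s a s' * V ω s')
    (hpInt : ∀ s a s', Integrable (fun ω => p ω s a s') μ)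
    (hpSqInt : ∀ s a s', Integrable (fun ω => (p ω s a s') ^ 2) μ)
    (hVInt : ∀ s, Integrable (fun ω => V ω s) μ)
    (hVSqInt : ∀ s, Integrable (fun ω => (V ω s) ^ 2) μ)
    :
    ∀ s : S,
      stepVar pol (fun s a s' => ∫ ω, p ω s a s' ∂μ) (fun s' => ∫ ω, V ω s' ∂μ) s
        = mVar μ (fun ω => ∑ a, ∑ s', pol s a * p ω s a s' * (∫ ω', V ω' s' ∂μ))
          + ∫ ω, stepVar pol (p ω) (fun s' => ∫ ω', V ω' s' ∂μ) s ∂μ := by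
  intro s
  simp only [stepVar, mVar]
  rw [integral_sub (integrable_stepMean hpInt pol (fun s' => (∫ ω', V ω' s' ∂μ) ^ 2) s)
      (integrable_sq_stepMean hpMeas hpSqInt pol _ s),
    integral_stepMean hpInt pol (fun s' => (∫ ω', V ω' s' ∂μ) ^ 2) s,
    integral_stepMean hpInt]
  ring
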